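/- Let n ≥ 1, 1 ≤ p < ∞, and 0 < α < n. There exists a function V ∈ L^p_loc(ℝ^n) such that V belongs to the bounded Stummel modulus class \tilde{S}_{p,α}(ℝ^n) but V ∉ S_{p,α}(ℝ^n); in fact, with x_k := (2^{−k},0,…,0) and V_k := 8^{αk} χ_{B(x_k,8^{−k})}, the function V := ( Σ_{k≥3} V_k )^{1/p} satisfies η_{p,α}V(r) < ∞ for all r > 0 while η_{p,α}V(r)^p ≥ c(n)/α for all r > 0 (where c(n) = |B(0,1)|). Hence the inclusion S_{p,α} ⊆ \tilde{S}_{p,α} is proper. -/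

import Mathlib

/-! A bump of height `δ^{-α}` on a ball of radius `δ` has a Riesz potential of order `α` that, at
the centre of the ball, equals `(n / α) |B(0, 1)|` whatever `δ` is. Bumps shrinking to the origin
thus keep the Stummel modulus of `V` away from zero at every scale. The modulus stays finite because
the balls `B(x_k, 2^{-k} / 4)` are pairwise disjoint: a point `x` lies in at most one of them, whose
bump contributes at most a constant independent of `k`, and any other bump, seen from distance at
least `2^{-k} / 4`, contributes at most a multiple of `(8^{-k} / 2^{-k})^{n - α} = 4^{-k (n - α)}`.
-/

open MeasureTheory Metric Filter Set ENNReal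

noncomputable section

/-- Euclidean space ℝ^n. -/
abbrev Euc (n : ℕ) := EuclideanSpace ℝ (Fin n)

/-- Stummel p-modulus with general weight Ψ:
`η_{p,Ψ}f(r) = sup_x ( ∫_{|x-y|<r} |f(y)|^p Ψ(|x-y|)/|x-y|^n dy )^{1/p}`. -/
noncomputable def stummelMod (n : ℕ) (p : ℝ) (Ψ : ℝ → ℝ) (f : Euc n → ℝ) (r : ℝ) : ℝ≥0∞ :=
  ⨆ x : Euc n,
    (∫⁻ y in ball x r,
        ENNReal.ofReal (|f y| ^ p * Ψ (dist x y) / dist x y ^ (n : ℝ))) ^ (1 / p)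

/-- Stummel p-modulus with power weight Ψ(t) = t^α:
`η_{p,α}f(r) = sup_x ( ∫_{|x-y|<r} |f(y)|^p / |x-y|^{n-α} dy )^{1/p}`. -/
noncomputable def stummelModA (n : ℕ) (p α : ℝ) (f : Euc n → ℝ) (r : ℝ) : ℝ≥0∞ :=
  ⨆ x : Euc n,
    (∫⁻ y in ball x r,
        ENNReal.ofReal (|f y| ^ p / dist x y ^ ((n : ℝ) - α))) ^ (1 / p)

/-- f ∈ L^p_loc(ℝ^n). -/
def MemLocLp (n : ℕ) (p : ℝ) (f : Euc n → ℝ) : Prop :=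
  LocallyIntegrable (fun y => |f y| ^ p) volume

/-- The generalized Stummel p-class `S_{p,Ψ}`. -/
def MemStummel (n : ℕ) (p : ℝ) (Ψ : ℝ → ℝ) (f : Euc n → ℝ) : Prop :=
  MemLocLp n p f ∧ (∀ r > 0, stummelMod n p Ψ f r < ⊤) ∧
    Tendsto (stummelMod n p Ψ f) (nhdsWithin 0 (Ioi 0)) (nhds 0)

/-- The Stummel p-class `S_{p,α}` (power weight). -/
def MemStummelA (n : ℕ) (p α : ℝ) (f : Euc n → ℝ) : Prop :=
  MemLocLp n p f ∧ (∀ r > 0, stummelModA n p α f r < ⊤) ∧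
    Tendsto (stummelModA n p α f) (nhdsWithin 0 (Ioi 0)) (nhds 0)

/-- The bounded Stummel modulus class `S̃_{p,α}`. -/
def MemStummelBddA (n : ℕ) (p α : ℝ) (f : Euc n → ℝ) : Prop :=
  MemLocLp n p f ∧ ∀ r > 0, stummelModA n p α f r < ⊤

/-- Generalized Morrey norm `‖f‖_{L^{p,Ψ}}`. -/
noncomputable def morreyNorm (n : ℕ) (p : ℝ) (Ψ : ℝ → ℝ) (f : Euc n → ℝ) : ℝ≥0∞ :=
  ⨆ (x : Euc n) (r : ℝ) (_ : 0 < r),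
    (volume (ball x r))⁻¹ ^ (1 / p) * ENNReal.ofReal (Ψ r)⁻¹ *
      (∫⁻ y in ball x r, ENNReal.ofReal (|f y| ^ p)) ^ (1 / p)

/-- The generalized Morrey space `L^{p,Ψ}`. -/
def MemMorrey (n : ℕ) (p : ℝ) (Ψ : ℝ → ℝ) (f : Euc n → ℝ) : Prop :=
  MemLocLp n p f ∧ morreyNorm n p Ψ f < ⊤

/-- Classical Morrey norm `‖f‖_{L^{p,λ}}`. -/
noncomputable def morreyNormC (n : ℕ) (p lam : ℝ) (f : Euc n → ℝ) : ℝ≥0∞ :=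
  ⨆ (x : Euc n) (r : ℝ) (_ : 0 < r),
    ENNReal.ofReal (r ^ (-(lam / p))) *
      (∫⁻ y in ball x r, ENNReal.ofReal (|f y| ^ p)) ^ (1 / p)

/-- The classical Morrey space `L^{p,λ}`. -/
def MemMorreyC (n : ℕ) (p lam : ℝ) (f : Euc n → ℝ) : Prop :=
  MemLocLp n p f ∧ morreyNormC n p lam f < ⊤

/-- Generalized weak Morrey norm `‖f‖_{wL^{p,Ψ}}`. -/
noncomputable def weakMorreyNorm (n : ℕ) (p : ℝ) (Ψ : ℝ → ℝ) (f : Euc n → ℝ) : ℝ≥0∞ :=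
  ⨆ (x : Euc n) (r : ℝ) (_ : 0 < r) (t : ℝ) (_ : 0 < t),
    ENNReal.ofReal t * (volume {y ∈ ball x r | t < |f y|}) ^ (1 / p) /
      (ENNReal.ofReal (Ψ r) * (volume (ball x r)) ^ (1 / p))

/-- The generalized weak Morrey space `wL^{p,Ψ}`. -/
def MemWeakMorrey (n : ℕ) (p : ℝ) (Ψ : ℝ → ℝ) (f : Euc n → ℝ) : Prop :=
  Measurable f ∧ weakMorreyNorm n p Ψ f < ⊤

/-- Classical weak Morrey norm `‖f‖_{wL^{p,λ}}`. -/
noncomputable def weakMorreyNormC (n : ℕ) (p lam : ℝ) (f : Euc n → ℝ) : ℝ≥0∞ :=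
  ⨆ (x : Euc n) (r : ℝ) (_ : 0 < r) (t : ℝ) (_ : 0 < t),
    ENNReal.ofReal (r ^ (-(lam / p))) * ENNReal.ofReal t *
      (volume {y ∈ ball x r | t < |f y|}) ^ (1 / p)

/-- The classical weak Morrey space `wL^{p,λ}`. -/
def MemWeakMorreyC (n : ℕ) (p lam : ℝ) (f : Euc n → ℝ) : Prop :=
  Measurable f ∧ weakMorreyNormC n p lam f < ⊤

/-- Decreasing rearrangement `f*(t) = inf{σ > 0 : |{|f| > σ}| ≤ t}`. -/
noncomputable def rearrangement (n : ℕ) (f : Euc n → ℝ) (t : ℝ) : ℝ :=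
  sInf {σ : ℝ | 0 < σ ∧ volume {x : Euc n | σ < |f x|} ≤ ENNReal.ofReal t}

/-- Lorentz norm `‖f‖_{L^p_κ} = ( ∫₀^∞ (t^{1/κ} f*(t))^p dt/t )^{1/p}`. -/
noncomputable def lorentzNorm (n : ℕ) (kappa p : ℝ) (f : Euc n → ℝ) : ℝ≥0∞ :=
  (∫⁻ t in Ioi (0 : ℝ),
      ENNReal.ofReal ((t ^ (1 / kappa) * rearrangement n f t) ^ p / t)) ^ (1 / p)

/-- The Lorentz space `L^p_κ`. -/
def MemLorentz (n : ℕ) (kappa p : ℝ) (f : Euc n → ℝ) : Prop :=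
  Measurable f ∧ lorentzNorm n kappa p f < ⊤

end
open Module (finrank)
open scoped Function

lemma pow_pred_mul_inv_rpow_sub {d : ℕ} {α t : ℝ} (hd : 0 < d) (ht : 0 < t) :
    t ^ (d - 1) * (t ^ ((d : ℝ) - α))⁻¹ = t ^ (α - 1) := by
  rw [← Real.rpow_natCast, ← Real.rpow_neg ht.le, ← Real.rpow_add ht, Nat.cast_pred hd]
  ring_nf

section RieszPotential

variable {E : Type*} [NormedAddCommGroup E] [NormedSpace ℝ E] {α : ℝ}

/-- The unnormalised Riesz kernel `|x - y|^{α - d}` of order `α` on a space of dimension `d`.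
It is written as an inverse, as in `stummelModA`, so that for `α ≠ d` it vanishes on the diagonal
by convention. -/
noncomputable def rieszKernel (α : ℝ) (x y : E) : ℝ≥0∞ :=
  ENNReal.ofReal (dist x y ^ ((finrank ℝ E : ℝ) - α))⁻¹

variable [MeasurableSpace E]

/-- The Riesz potential `∫ g(y) |x - y|^{α - d} dμ(y)`. Restricting `μ` to a ball about `x` gives
the quantities whose supremum over `x` is the Stummel modulus. -/
noncomputable def rieszPotential (μ : Measure E) (α : ℝ) (g : E → ℝ≥0∞) (x : E) : ℝ≥0∞ :=
  ∫⁻ y, g y * rieszKernel α x y ∂μ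

/-- The indicator of `B(z, δ)` at height `δ^{-α}`, the height at which its Riesz potential of order
`α` is invariant under scaling. -/
noncomputable def scaledBump {X : Type*} [PseudoMetricSpace X] (α : ℝ) (z : X) (δ : ℝ) :
    X → ℝ≥0∞ :=
  (ball z δ).indicator fun _ => ENNReal.ofReal (δ ^ (-α))

lemma rieszPotential_mono {μ : Measure E} {g h : E → ℝ≥0∞} (hgh : g ≤ h) (x : E) :
    rieszPotential μ α g x ≤ rieszPotential μ α h x :=
  lintegral_mono fun y => mul_le_mul_left (hgh y) _

lemma rieszPotential_restrict_le (μ : Measure E) (s : Set E) (g : E → ℝ≥0∞) (x : E) :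
    rieszPotential (μ.restrict s) α g x ≤ rieszPotential μ α g x :=
  setLIntegral_le_lintegral s _

lemma setLIntegral_rieszKernel_le_of_le_dist (μ : Measure E) (hα : α ≤ finrank ℝ E) {A : Set E}
    {x : E} {ρ : ℝ} (hρ : 0 < ρ) (hA : ∀ y ∈ A, ρ ≤ dist x y) :
    ∫⁻ y in A, rieszKernel α x y ∂μ ≤
      ENNReal.ofReal (ρ ^ ((finrank ℝ E : ℝ) - α))⁻¹ * μ A := by
  rw [← setLIntegral_const]
  refine setLIntegral_mono measurable_const fun y hy => ENNReal.ofReal_le_ofReal ?_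
  have : 0 ≤ (finrank ℝ E : ℝ) - α := sub_nonneg.2 hα
  gcongr
  exact hA y hy

variable [BorelSpace E]

lemma measurable_rieszKernel (α : ℝ) (x : E) : Measurable (rieszKernel α x) := by
  unfold rieszKernel
  fun_prop

lemma rieszPotential_tsum {ι : Type*} [Countable ι] (μ : Measure E) {g : ι → E → ℝ≥0∞}
    (hg : ∀ i, Measurable (g i)) (x : E) :
    rieszPotential μ α (fun y => ∑' i, g i y) x = ∑' i, rieszPotential μ α (g i) x := by
  simp only [rieszPotential, ← ENNReal.tsum_mul_right]
  exact lintegral_tsum fun i => ((hg i).mul (measurable_rieszKernel α x)).aemeasurable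

lemma rieszPotential_scaledBump (μ : Measure E) (x z : E) (δ : ℝ) :
    rieszPotential μ α (scaledBump α z δ) x =
      ENNReal.ofReal (δ ^ (-α)) * ∫⁻ y in ball z δ, rieszKernel α x y ∂μ := by
  rw [← lintegral_const_mul _ (measurable_rieszKernel α x),
    ← lintegral_indicator measurableSet_ball]
  exact lintegral_congr fun y => (indicator_mul_left (ball z δ) _ _).symm

lemma rieszPotential_restrict_scaledBump (μ : Measure E) (x : E) {z : E} {δ : ℝ} {s : Set E}
    (hs : ball z δ ⊆ s) :
    rieszPotential (μ.restrict s) α (scaledBump α z δ) x =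
      rieszPotential μ α (scaledBump α z δ) x := by
  rw [rieszPotential_scaledBump, rieszPotential_scaledBump, Measure.restrict_restrict_of_subset hs]

lemma setLIntegral_ball_le_mul_rieszPotential (μ : Measure E) [NullSingletonClass μ]
    (hα : α ≤ finrank ℝ E) (g : E → ℝ≥0∞) (x : E) {r : ℝ} (hr : 0 < r) :
    ∫⁻ y in ball x r, g y ∂μ ≤ ENNReal.ofReal (r ^ ((finrank ℝ E : ℝ) - α)) *
      rieszPotential (μ.restrict (ball x r)) α g x := by
  rw [rieszPotential, ← lintegral_const_mul' _ _ ofReal_ne_top]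
  refine lintegral_mono_ae ?_
  filter_upwards [ae_restrict_mem measurableSet_ball, Measure.ae_ne (μ.restrict (ball x r)) x]
    with y hy hyx
  have hdist : 0 < dist x y := dist_pos.2 hyx.symm
  have hker : 1 ≤ ENNReal.ofReal (r ^ ((finrank ℝ E : ℝ) - α)) * rieszKernel α x y := by
    rw [rieszKernel, ← ENNReal.ofReal_mul (by positivity), ENNReal.one_le_ofReal,
      ← div_eq_mul_inv, one_le_div (by positivity)]
    exact Real.rpow_le_rpow hdist.le (mem_ball'.1 hy).le (sub_nonneg.2 hα)
  calc g y ≤ g y * (ENNReal.ofReal (r ^ ((finrank ℝ E : ℝ) - α)) * rieszKernel α x y) :=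
        le_mul_of_one_le_right' hker
    _ = _ := mul_left_comm _ _ _

section Haar

variable [FiniteDimensional ℝ E] (μ : Measure E) [μ.IsAddHaarMeasure]

lemma integrableOn_ball_inv_norm_rpow [Nontrivial E] (hα : 0 < α) (δ : ℝ) :
    IntegrableOn (fun y : E => (‖y‖ ^ ((finrank ℝ E : ℝ) - α))⁻¹) (ball 0 δ) μ := by
  refine integrableOn_ball_of_norm_le_rpow (C := 1) Module.finrank_pos
    (sub_lt_self (finrank ℝ E : ℝ) hα) (.of_forall fun y => ?_)
    (measurable_norm.pow_const _).inv.aestronglyMeasurable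
  rw [Real.norm_of_nonneg (by positivity), one_mul, Real.rpow_neg (norm_nonneg y)]

lemma setIntegral_ball_inv_norm_rpow [Nontrivial E] (hα : 0 < α) {δ : ℝ} (hδ : 0 < δ) :
    ∫ y in ball (0 : E) δ, (‖y‖ ^ ((finrank ℝ E : ℝ) - α))⁻¹ ∂μ =
      finrank ℝ E / α * δ ^ α * μ.real (ball 0 1) := by
  set f : ℝ → ℝ := (Iio δ).indicator fun t => (t ^ ((finrank ℝ E : ℝ) - α))⁻¹
  have hball : (ball (0 : E) δ).indicator (fun y => (‖y‖ ^ ((finrank ℝ E : ℝ) - α))⁻¹) =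
      fun y => f ‖y‖ := by
    ext y
    simp only [f, indicator, mem_ball, dist_zero_right, mem_Iio]
  have hpolar : EqOn (fun t : ℝ => t ^ (finrank ℝ E - 1) • f t)
      ((Iio δ).indicator fun t => t ^ (α - 1)) (Ioi 0) := fun t ht => by
    simp only [f, indicator_apply, smul_eq_mul, mul_ite, mul_zero,
      pow_pred_mul_inv_rpow_sub (α := α) Module.finrank_pos ht]
  rw [← integral_indicator measurableSet_ball, hball, integral_fun_norm_addHaar μ,
    setIntegral_congr_fun measurableSet_Ioi hpolar, setIntegral_indicator measurableSet_Iio,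
    Ioi_inter_Iio, ← integral_Ioc_eq_integral_Ioo, ← intervalIntegral.integral_of_le hδ.le,
    integral_rpow (Or.inl (by linarith)), sub_add_cancel, Real.zero_rpow hα.ne', sub_zero,
    nsmul_eq_mul, smul_eq_mul]
  ring

lemma setLIntegral_rieszKernel_ball_self [Nontrivial E] (hα : 0 < α) (x : E) {δ : ℝ}
    (hδ : 0 < δ) :
    ∫⁻ y in ball x δ, rieszKernel α x y ∂μ =
      ENNReal.ofReal (finrank ℝ E / α * δ ^ α) * μ (ball 0 1) := by
  have hball : ball x δ = (x - ·) ⁻¹' ball 0 δ := by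
    ext y
    simp [dist_eq_norm, norm_sub_rev]
  have htranslate : ∫⁻ y in ball x δ, rieszKernel α x y ∂μ =
      ∫⁻ y in ball (0 : E) δ, ENNReal.ofReal (‖y‖ ^ ((finrank ℝ E : ℝ) - α))⁻¹ ∂μ := by
    simp only [rieszKernel, dist_eq_norm, hball]
    exact (μ.measurePreserving_sub_left x).setLIntegral_comp_preimage measurableSet_ball
      (measurable_norm.pow_const _).inv.ennreal_ofReal
  rw [htranslate, ← ofReal_integral_eq_lintegral_ofReal (integrableOn_ball_inv_norm_rpow μ hα δ)
      (.of_forall fun y => by positivity), setIntegral_ball_inv_norm_rpow μ hα hδ,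
    ENNReal.ofReal_mul (by positivity), ofReal_measureReal measure_ball_lt_top.ne]

lemma rieszPotential_scaledBump_self [Nontrivial E] (hα : 0 < α) (z : E) {δ : ℝ} (hδ : 0 < δ) :
    rieszPotential μ α (scaledBump α z δ) z =
      ENNReal.ofReal (finrank ℝ E / α) * μ (ball 0 1) := by
  rw [rieszPotential_scaledBump, setLIntegral_rieszKernel_ball_self μ hα z hδ, ← mul_assoc,
    ← ENNReal.ofReal_mul (by positivity), mul_left_comm, ← Real.rpow_add hδ, neg_add_cancel,
    Real.rpow_zero, mul_one]

lemma rieszPotential_scaledBump_le_of_le_dist (hα : α ≤ finrank ℝ E) {x z : E} {δ s : ℝ}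
    (hδ : 0 < δ) (hδs : 2 * δ ≤ s) (hxz : s ≤ dist x z) :
    rieszPotential μ α (scaledBump α z δ) x ≤
      ENNReal.ofReal ((2 * δ / s) ^ ((finrank ℝ E : ℝ) - α)) * μ (ball 0 1) := by
  have hs : 0 < s := by linarith
  have hfar : ∀ y ∈ ball z δ, s / 2 ≤ dist x y := fun y hy => by
    linarith [dist_triangle x y z, mem_ball.1 hy]
  have hscale : δ ^ (-α) * ((s / 2) ^ ((finrank ℝ E : ℝ) - α))⁻¹ * δ ^ finrank ℝ E =
      (2 * δ / s) ^ ((finrank ℝ E : ℝ) - α) := by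
    rw [show 2 * δ / s = δ * (s / 2)⁻¹ by field_simp, Real.mul_rpow hδ.le (by positivity),
      Real.inv_rpow (by positivity), mul_right_comm, ← Real.rpow_natCast, ← Real.rpow_add hδ,
      neg_add_eq_sub]
  calc rieszPotential μ α (scaledBump α z δ) x
      ≤ ENNReal.ofReal (δ ^ (-α)) *
          (ENNReal.ofReal ((s / 2) ^ ((finrank ℝ E : ℝ) - α))⁻¹ * μ (ball z δ)) := by
        rw [rieszPotential_scaledBump]
        gcongr
        exact setLIntegral_rieszKernel_le_of_le_dist μ hα (half_pos hs) hfar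
    _ = _ := by
        rw [Measure.addHaar_ball_of_pos μ z hδ, ← mul_assoc, ← mul_assoc,
          ← ENNReal.ofReal_mul (by positivity), ← ENNReal.ofReal_mul (by positivity), hscale]

lemma rieszPotential_scaledBump_le [Nontrivial E] (hα : 0 < α) (hαd : α ≤ finrank ℝ E) (x z : E)
    {δ : ℝ} (hδ : 0 < δ) :
    rieszPotential μ α (scaledBump α z δ) x ≤
      ENNReal.ofReal (finrank ℝ E / α + 1) * μ (ball 0 1) := by
  have hnear : ∫⁻ y in ball z δ ∩ ball x δ, rieszKernel α x y ∂μ ≤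
      ENNReal.ofReal (finrank ℝ E / α * δ ^ α) * μ (ball 0 1) :=
    (lintegral_mono_set inter_subset_right).trans
      (setLIntegral_rieszKernel_ball_self μ hα x hδ).le
  have hfar : ∫⁻ y in ball z δ \ ball x δ, rieszKernel α x y ∂μ ≤
      ENNReal.ofReal (δ ^ α) * μ (ball 0 1) := by
    have hscale : (δ ^ ((finrank ℝ E : ℝ) - α))⁻¹ * δ ^ finrank ℝ E = δ ^ α := by
      rw [← Real.rpow_neg hδ.le, ← Real.rpow_natCast, ← Real.rpow_add hδ]
      ring_nf
    calc ∫⁻ y in ball z δ \ ball x δ, rieszKernel α x y ∂μ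
        ≤ ENNReal.ofReal (δ ^ ((finrank ℝ E : ℝ) - α))⁻¹ * μ (ball z δ \ ball x δ) :=
          setLIntegral_rieszKernel_le_of_le_dist μ hαd hδ fun y hy =>
            not_lt.1 fun hlt => hy.2 (mem_ball'.2 hlt)
      _ ≤ ENNReal.ofReal (δ ^ ((finrank ℝ E : ℝ) - α))⁻¹ * μ (ball z δ) := by
          gcongr
          exact sdiff_subset
      _ = ENNReal.ofReal (δ ^ α) * μ (ball 0 1) := by
          rw [Measure.addHaar_ball_of_pos μ z hδ, ← mul_assoc,
            ← ENNReal.ofReal_mul (by positivity), hscale]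
  calc rieszPotential μ α (scaledBump α z δ) x
      ≤ ENNReal.ofReal (δ ^ (-α)) * (ENNReal.ofReal (finrank ℝ E / α * δ ^ α) * μ (ball 0 1) +
          ENNReal.ofReal (δ ^ α) * μ (ball 0 1)) := by
        rw [rieszPotential_scaledBump, ← lintegral_inter_add_sdiff _ _ measurableSet_ball]
        gcongr
    _ = ENNReal.ofReal (finrank ℝ E / α + 1) * μ (ball 0 1) := by
        rw [← add_mul, ← ENNReal.ofReal_add (by positivity) (by positivity), ← mul_assoc,
          ← ENNReal.ofReal_mul (by positivity), ← add_one_mul, mul_left_comm, ← Real.rpow_add hδ,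
          neg_add_cancel, Real.rpow_zero, mul_one]

end Haar

end RieszPotential

lemma tsum_le_add_tsum_of_subsingleton {ι : Type*} {f g : ι → ℝ≥0∞} {C : ℝ≥0∞} {P : Set ι}
    (hP : P.Subsingleton) (hC : ∀ i ∈ P, f i ≤ C) (hg : ∀ i ∉ P, f i ≤ g i) :
    ∑' i, f i ≤ C + ∑' i, g i := by
  have hfg : ∀ i, f i ≤ P.indicator (fun _ => C) i + g i := fun i => by
    by_cases hi : i ∈ P
    · simpa only [indicator_of_mem hi] using (hC i hi).trans le_self_add
    · simpa only [indicator_of_notMem hi, zero_add] using hg i hi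
  have hsum : ∑' i, P.indicator (fun _ => C) i ≤ C := by
    rw [← tsum_subtype]
    rcases hP.eq_empty_or_singleton with rfl | ⟨i, rfl⟩ <;> simp
  calc ∑' i, f i ≤ ∑' i, (P.indicator (fun _ => C) i + g i) := ENNReal.tsum_le_tsum hfg
    _ = ∑' i, P.indicator (fun _ => C) i + ∑' i, g i := ENNReal.tsum_add
    _ ≤ C + ∑' i, g i := by gcongr

section BumpSum

/-- The superposition of the scaled bumps on the balls `B(c i, δ i)`. -/
noncomputable def bumpSum {ι X : Type*} [PseudoMetricSpace X] (α : ℝ) (c : ι → X) (δ : ι → ℝ)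
    (y : X) : ℝ≥0∞ :=
  ∑' i, scaledBump α (c i) (δ i) y

variable {ι : Type*} {α : ℝ}

section PseudoMetricSpace

variable {X : Type*} [PseudoMetricSpace X] {c : ι → X} {δ : ι → ℝ}

lemma bumpSum_eq_of_mem (hdisj : Pairwise (Disjoint on fun i => ball (c i) (δ i)))
    {i : ι} {y : X} (hy : y ∈ ball (c i) (δ i)) :
    bumpSum α c δ y = ENNReal.ofReal (δ i ^ (-α)) := by
  have hother : ∀ j ≠ i, scaledBump α (c j) (δ j) y = 0 := fun j hj =>
    indicator_of_notMem (disjoint_right.1 (hdisj hj) hy) _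
  rw [bumpSum, tsum_eq_single i hother]
  exact indicator_of_mem hy _

lemma toReal_bumpSum (hδ : ∀ i, 0 ≤ δ i) (y : X) :
    (bumpSum α c δ y).toReal =
      ∑' i, (ball (c i) (δ i)).indicator (fun _ => δ i ^ (-α)) y := by
  have hterm : ∀ i, scaledBump α (c i) (δ i) y =
      ENNReal.ofReal ((ball (c i) (δ i)).indicator (fun _ => δ i ^ (-α)) y) := fun i =>
    congr_fun (indicator_comp_of_zero ENNReal.ofReal_zero) y
  have hnonneg : ∀ i, 0 ≤ (ball (c i) (δ i)).indicator (fun _ => δ i ^ (-α)) y := fun i =>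
    indicator_nonneg (fun _ _ => Real.rpow_nonneg (hδ i) _) y
  simp only [bumpSum, hterm, ENNReal.tsum_toReal_eq fun _ => ofReal_ne_top,
    ENNReal.toReal_ofReal (hnonneg _)]

lemma measurable_scaledBump [MeasurableSpace X] [BorelSpace X] (α : ℝ) (z : X) (δ : ℝ) :
    Measurable (scaledBump α z δ) :=
  measurable_const.indicator measurableSet_ball

lemma measurable_bumpSum [Countable ι] [MeasurableSpace X] [BorelSpace X] :
    Measurable (bumpSum α c δ) :=
  Measurable.tsum fun _ => measurable_scaledBump _ _ _

/-- The function whose `p`-th power is the superposition of the scaled bumps on the balls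
`B(c i, δ i)`, with value zero at the points where that superposition is infinite. -/
noncomputable def bumpRoot (p α : ℝ) (c : ι → X) (δ : ι → ℝ) (y : X) : ℝ :=
  (bumpSum α c δ y).toReal ^ (1 / p)

lemma abs_bumpRoot_rpow {p : ℝ} (hp : 0 < p) (y : X) :
    |bumpRoot p α c δ y| ^ p = (bumpSum α c δ y).toReal := by
  rw [bumpRoot, abs_of_nonneg (by positivity), ← Real.rpow_mul toReal_nonneg,
    one_div_mul_cancel hp.ne', Real.rpow_one]

lemma measurable_bumpRoot [Countable ι] [MeasurableSpace X] [BorelSpace X] {p : ℝ} :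
    Measurable (bumpRoot p α c δ) :=
  measurable_bumpSum.ennreal_toReal.pow_const _

end PseudoMetricSpace

lemma rieszPotential_bumpSum_le [Countable ι] {E : Type*} [NormedAddCommGroup E]
    [NormedSpace ℝ E] [FiniteDimensional ℝ E] [Nontrivial E] [MeasurableSpace E] [BorelSpace E]
    (μ : Measure E) [μ.IsAddHaarMeasure] (hα : 0 < α) (hαd : α ≤ finrank ℝ E) {c : ι → E}
    {δ s : ι → ℝ} (hδ : ∀ i, 0 < δ i) (hδs : ∀ i, 2 * δ i ≤ s i)
    (hdisj : Pairwise (Disjoint on fun i => ball (c i) (s i))) (x : E) :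
    rieszPotential μ α (bumpSum α c δ) x ≤
      ENNReal.ofReal (finrank ℝ E / α + 1) * μ (ball 0 1) +
        ∑' i, ENNReal.ofReal ((2 * δ i / s i) ^ ((finrank ℝ E : ℝ) - α)) * μ (ball 0 1) := by
  have hnear : {i | x ∈ ball (c i) (s i)}.Subsingleton := fun i hi j hj => by
    by_contra hij
    exact disjoint_left.1 (hdisj hij) hi hj
  refine (rieszPotential_tsum μ (fun i => measurable_scaledBump α (c i) (δ i)) x).trans_le
    (tsum_le_add_tsum_of_subsingleton hnear (fun i _ => ?_) fun i hi => ?_)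
  · exact rieszPotential_scaledBump_le μ hα hαd x (c i) (hδ i)
  · exact rieszPotential_scaledBump_le_of_le_dist μ hαd (hδ i) (hδs i) (not_lt.1 hi)

end BumpSum

section StummelModulus

variable {n : ℕ} {p α : ℝ}

lemma stummelModA_rpow (hp : 0 < p) (f : Euc n → ℝ) (r : ℝ) :
    stummelModA n p α f r ^ p =
      ⨆ x, rieszPotential (volume.restrict (ball x r)) α
        (fun y => ENNReal.ofReal (|f y| ^ p)) x := by
  have hintegrand : ∀ x y, ENNReal.ofReal (|f y| ^ p / dist x y ^ ((n : ℝ) - α)) =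
      ENNReal.ofReal (|f y| ^ p) * rieszKernel α x y := fun x y => by
    rw [rieszKernel, finrank_euclideanSpace_fin, div_eq_mul_inv,
      ENNReal.ofReal_mul (by positivity)]
  have hroot : stummelModA n p α f r = (⨆ x, rieszPotential (volume.restrict (ball x r)) α
      (fun y => ENNReal.ofReal (|f y| ^ p)) x) ^ (1 / p) := by
    simp only [stummelModA, hintegrand]
    exact ((ENNReal.orderIsoRpow (1 / p) (one_div_pos.2 hp)).map_iSup _).symm
  rw [hroot, ← ENNReal.rpow_mul, one_div_mul_cancel hp.ne', ENNReal.rpow_one]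

lemma stummelModA_lt_top (hp : 0 < p) {f : Euc n → ℝ} {M : ℝ≥0∞} (hM : M ≠ ⊤)
    (hf : ∀ x, rieszPotential volume α (fun y => ENNReal.ofReal (|f y| ^ p)) x ≤ M) (r : ℝ) :
    stummelModA n p α f r < ⊤ := by
  rw [← ENNReal.rpow_lt_top_iff_of_pos hp, stummelModA_rpow hp]
  exact (iSup_le fun x => (rieszPotential_restrict_le _ _ _ x).trans (hf x)).trans_lt hM.lt_top

lemma memLocLp_of_stummelModA_lt_top [NeZero n] (hp : 0 < p) (hα : α ≤ n) {f : Euc n → ℝ}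
    (hf : AEStronglyMeasurable f) {r : ℝ} (hr : 0 < r) (hfin : stummelModA n p α f r < ⊤) :
    MemLocLp n p f := by
  intro x
  have hpot : rieszPotential (volume.restrict (ball x r)) α
      (fun y => ENNReal.ofReal (|f y| ^ p)) x < ⊤ := by
    rw [← ENNReal.rpow_lt_top_iff_of_pos hp, stummelModA_rpow hp, iSup_lt_iff] at hfin
    obtain ⟨M, hM, hle⟩ := hfin
    exact (hle x).trans_lt hM
  have hmass : ∫⁻ y in ball x r, ENNReal.ofReal (|f y| ^ p) < ⊤ :=
    (setLIntegral_ball_le_mul_rieszPotential volume (by simpa using hα) _ x hr).trans_lt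
      (mul_lt_top ofReal_lt_top hpot)
  have hmeas : AEStronglyMeasurable (fun y => |f y| ^ p) (volume.restrict (ball x r)) :=
    ((continuous_abs.comp_aestronglyMeasurable hf).aemeasurable.pow_const
      p).aestronglyMeasurable.restrict
  exact ⟨ball x r, ball_mem_nhds x hr, (lintegral_ofReal_ne_top_iff_integrable hmeas
    (.of_forall fun y => by positivity)).1 hmass.ne⟩

lemma le_stummelModA_rpow [NeZero n] (hp : 0 < p) (hα : 0 < α) {f : Euc n → ℝ} {z : Euc n}
    {δ r : ℝ} (hδ : 0 < δ) (hδr : δ ≤ r)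
    (hf : ∀ y ∈ ball z δ, δ ^ (-α) ≤ |f y| ^ p) :
    ENNReal.ofReal (n / α) * volume (ball (0 : Euc n) 1) ≤ stummelModA n p α f r ^ p := by
  have hbump : scaledBump α z δ ≤ fun y => ENNReal.ofReal (|f y| ^ p) :=
    indicator_le fun y hy => ENNReal.ofReal_le_ofReal (hf y hy)
  have hself := rieszPotential_scaledBump_self volume hα z hδ
  rw [finrank_euclideanSpace_fin] at hself
  rw [stummelModA_rpow hp, ← hself,
    ← rieszPotential_restrict_scaledBump volume z (ball_subset_ball hδr)]
  exact (rieszPotential_mono hbump z).trans (le_iSup (fun x =>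
    rieszPotential (volume.restrict (ball x r)) α (fun y => ENNReal.ofReal (|f y| ^ p)) x) z)

lemma not_memStummelA_of_forall_le (hp : 0 < p) {f : Euc n → ℝ} {C : ℝ≥0∞} (hC : C ≠ 0)
    (hf : ∀ r > 0, C ≤ stummelModA n p α f r ^ p) : ¬ MemStummelA n p α f := by
  rintro ⟨-, -, hlim⟩
  have hlim_rpow :
      Tendsto (fun r => stummelModA n p α f r ^ p) (nhdsWithin 0 (Ioi 0)) (nhds 0) := by
    simpa only [ENNReal.zero_rpow_of_pos hp] using hlim.ennrpow_const p
  exact hC (nonpos_iff_eq_zero.1 (ge_of_tendsto hlim_rpow (eventually_nhdsWithin_of_forall hf)))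

section BumpRoot

variable [NeZero n] {ι : Type*} {c : ι → Euc n} {δ : ι → ℝ}

lemma stummelModA_bumpRoot_lt_top [Countable ι] (hp : 0 < p) (hα : 0 < α) (hαn : α ≤ n)
    {s : ι → ℝ} (hδ : ∀ i, 0 < δ i) (hδs : ∀ i, 2 * δ i ≤ s i)
    (hdisj : Pairwise (Disjoint on fun i => ball (c i) (s i)))
    (hsum : ∑' i, ENNReal.ofReal ((2 * δ i / s i) ^ ((n : ℝ) - α)) ≠ ⊤) (r : ℝ) :
    stummelModA n p α (bumpRoot p α c δ) r < ⊤ := by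
  have hpow : (fun y => ENNReal.ofReal (|bumpRoot p α c δ y| ^ p)) ≤ bumpSum α c δ := fun y => by
    simpa only [abs_bumpRoot_rpow hp] using ofReal_toReal_le
  have hball : volume (ball (0 : Euc n) 1) ≠ ⊤ := measure_ball_lt_top.ne
  refine stummelModA_lt_top hp ?_ (fun x => (rieszPotential_mono hpow x).trans
    (rieszPotential_bumpSum_le volume hα (by simpa using hαn) hδ hδs hdisj x)) r
  rw [ENNReal.tsum_mul_right, finrank_euclideanSpace_fin]
  exact add_ne_top.2 ⟨mul_ne_top ofReal_ne_top hball, mul_ne_top hsum hball⟩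

lemma le_stummelModA_bumpRoot_rpow (hp : 0 < p) (hα : 0 < α)
    (hdisj : Pairwise (Disjoint on fun i => ball (c i) (δ i))) {i : ι} {r : ℝ}
    (hδ : 0 < δ i) (hδr : δ i ≤ r) :
    ENNReal.ofReal (n / α) * volume (ball (0 : Euc n) 1) ≤
      stummelModA n p α (bumpRoot p α c δ) r ^ p := by
  refine le_stummelModA_rpow hp hα hδ hδr (z := c i) fun y hy => ?_
  rw [abs_bumpRoot_rpow hp, bumpSum_eq_of_mem hdisj hy, toReal_ofReal (by positivity)]

end BumpRoot

end StummelModulus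

lemma div_ofReal_le_ofReal_div_mul {n : ℕ} (hn : 0 < n) {α : ℝ} (hα : 0 < α) (v : ℝ≥0∞) :
    v / ENNReal.ofReal α ≤ ENNReal.ofReal (n / α) * v := by
  have hn1 : (1 : ℝ) ≤ n := mod_cast hn
  rw [div_eq_mul_inv, ← ENNReal.ofReal_inv_of_pos hα, mul_comm, inv_eq_one_div]
  gcongr

lemma rpow_neg_natCast_add_three {b : ℝ} (hb : 0 ≤ b) (k : ℕ) :
    b ^ (-((k : ℝ) + 3)) = b⁻¹ ^ (k + 3) := by
  rw [Real.rpow_neg hb, inv_pow, ← Real.rpow_natCast]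
  norm_num

lemma exists_rpow_neg_natCast_add_three_le {b r : ℝ} (hb : 1 < b) (hr : 0 < r) :
    ∃ k : ℕ, b ^ (-((k : ℝ) + 3)) ≤ r := by
  obtain ⟨k, hk⟩ := exists_pow_lt_of_lt_one hr (inv_lt_one_of_one_lt₀ hb)
  refine ⟨k, le_trans ?_ hk.le⟩
  rw [rpow_neg_natCast_add_three (by positivity)]
  exact pow_le_pow_of_le_one (by positivity) (inv_le_one_of_one_le₀ hb.le) (k.le_add_right 3)

lemma two_mul_eight_rpow_div (k : ℕ) :
    2 * (8 : ℝ) ^ (-((k : ℝ) + 3)) / ((2 : ℝ) ^ (-((k : ℝ) + 3)) / 4) = 1 / 8 * (1 / 4) ^ k := by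
  rw [rpow_neg_natCast_add_three (by norm_num), rpow_neg_natCast_add_three (by norm_num),
    show (8 : ℝ)⁻¹ = 1 / 4 * 2⁻¹ by norm_num, mul_pow, pow_add (1 / 4 : ℝ)]
  field_simp
  norm_num

lemma two_mul_eight_rpow_le (k : ℕ) :
    2 * (8 : ℝ) ^ (-((k : ℝ) + 3)) ≤ (2 : ℝ) ^ (-((k : ℝ) + 3)) / 4 := by
  rw [← div_le_one (by positivity), two_mul_eight_rpow_div]
  exact mul_le_one₀ (by norm_num) (by positivity) (pow_le_one₀ (by norm_num) (by norm_num))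

lemma two_mul_two_rpow_le {j k : ℕ} (hjk : j < k) :
    2 * (2 : ℝ) ^ (-((k : ℝ) + 3)) ≤ (2 : ℝ) ^ (-((j : ℝ) + 3)) := by
  have hcast : (j : ℝ) + 1 ≤ k := mod_cast hjk
  rw [← Real.rpow_one_add' (by norm_num) (by linarith)]
  exact Real.rpow_le_rpow_of_exponent_le one_le_two (by linarith)

lemma pairwise_disjoint_ball_quarter {X : Type*} [PseudoMetricSpace X] {c : ℕ → X} {a : ℕ → ℝ}
    (ha : ∀ k, 0 ≤ a k) (hhalf : ∀ ⦃j k⦄, j < k → 2 * a k ≤ a j)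
    (hc : ∀ j k, a j - a k ≤ dist (c j) (c k)) :
    Pairwise (Disjoint on fun k => ball (c k) (a k / 4)) :=
  (pairwise_disjoint_on _).2 fun j k hjk =>
    ball_disjoint_ball (by linarith [ha j, hhalf hjk, hc j k])

lemma tsum_ofReal_geometric_rpow_ne_top {C q s : ℝ} (hC : 0 ≤ C) (hq : 0 ≤ q) (hq1 : q < 1)
    (hs : 0 < s) : ∑' k : ℕ, ENNReal.ofReal ((C * q ^ k) ^ s) ≠ ⊤ := by
  have hpow : ∀ k : ℕ, (C * q ^ k) ^ s = C ^ s * (q ^ s) ^ k := fun k => by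
    rw [Real.mul_rpow hC (by positivity), Real.rpow_pow_comm hq]
  have hsum : Summable fun k : ℕ => (C * q ^ k) ^ s := by
    simpa only [hpow] using (summable_geometric_of_lt_one (Real.rpow_nonneg hq s)
      (Real.rpow_lt_one hq hq1 hs)).mul_left (C ^ s)
  exact hsum.tsum_ofReal_ne_top

lemma pairwise_disjoint_ball_single_two_rpow {ι : Type*} [Fintype ι] [DecidableEq ι] (i : ι) :
    Pairwise (Disjoint on fun k : ℕ => ball
      (EuclideanSpace.single i ((2 : ℝ) ^ (-((k : ℝ) + 3)))) ((2 : ℝ) ^ (-((k : ℝ) + 3)) / 4)) :=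
  pairwise_disjoint_ball_quarter (fun k => by positivity) (fun _ _ => two_mul_two_rpow_le)
    fun j k => by
      rw [PiLp.dist_single_same, Real.dist_eq]
      exact le_abs_self _

lemma bumpRoot_eight_rpow {X : Type*} [PseudoMetricSpace X] (p α : ℝ) (c : ℕ → X) (y : X) :
    bumpRoot p α c (fun k => 8 ^ (-((k : ℝ) + 3))) y =
      (∑' k : ℕ, (ball (c k) ((8 : ℝ) ^ (-((k : ℝ) + 3)))).indicator
        (fun _ => (8 : ℝ) ^ (α * ((k : ℝ) + 3))) y) ^ (1 / p) := by
  have hheight : ∀ k : ℕ, ((8 : ℝ) ^ (-((k : ℝ) + 3))) ^ (-α) = 8 ^ (α * ((k : ℝ) + 3)) :=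
    fun k => by rw [← Real.rpow_mul (by norm_num), neg_mul_neg, mul_comm]
  rw [bumpRoot, toReal_bumpSum fun k => by positivity]
  simp only [hheight]

theorem bounded_stummel_class_proper_general (n : ℕ) (hn : 0 < n) (p α : ℝ)
    (hp : 0 < p) (hα : 0 < α) (hαn : α < n)
    (x : ℕ → Euc n)
    (hx : x = fun k : ℕ => EuclideanSpace.single (⟨0, hn⟩ : Fin n)
      ((2 : ℝ) ^ (-((k : ℝ) + 3))))
    (V : Euc n → ℝ)
    (hV : V = fun y =>
      (∑' k : ℕ, Set.indicator (ball (x k) ((8 : ℝ) ^ (-((k : ℝ) + 3))))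
        (fun _ => (8 : ℝ) ^ (α * ((k : ℝ) + 3))) y) ^ (1 / p)) :
    MemLocLp n p V ∧
    (∀ r > 0, stummelModA n p α V r < ⊤) ∧
    (∀ r > 0, volume (ball (0 : Euc n) 1) / ENNReal.ofReal α ≤ stummelModA n p α V r ^ p) ∧
    ¬ MemStummelA n p α V := by
  have : NeZero n := ⟨hn.ne'⟩
  let δ : ℕ → ℝ := fun k => 8 ^ (-((k : ℝ) + 3))
  have hδ : ∀ k, 0 < δ k := fun k => by positivity
  have hV_root : V = bumpRoot p α x δ := by
    ext y
    rw [hV, bumpRoot_eight_rpow]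
  have hdisj : Pairwise (Disjoint on fun k => ball (x k) (2 ^ (-((k : ℝ) + 3)) / 4)) :=
    hx ▸ pairwise_disjoint_ball_single_two_rpow _
  have hsum : ∑' k, ENNReal.ofReal ((2 * δ k / (2 ^ (-((k : ℝ) + 3)) / 4)) ^ (n - α)) ≠ ⊤ := by
    simp only [δ, two_mul_eight_rpow_div]
    exact tsum_ofReal_geometric_rpow_ne_top (by norm_num) (by norm_num) (by norm_num)
      (sub_pos.2 hαn)
  have hfin : ∀ r > 0, stummelModA n p α V r < ⊤ := fun r _ => hV_root ▸
    stummelModA_bumpRoot_lt_top hp hα hαn.le hδ two_mul_eight_rpow_le hdisj hsum r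
  have hsupp : Pairwise (Disjoint on fun k => ball (x k) (δ k)) := fun j k hjk =>
    (hdisj hjk).mono (ball_subset_ball (by linarith [two_mul_eight_rpow_le j, hδ j]))
      (ball_subset_ball (by linarith [two_mul_eight_rpow_le k, hδ k]))
  have hlow : ∀ r > 0,
      volume (ball (0 : Euc n) 1) / ENNReal.ofReal α ≤ stummelModA n p α V r ^ p := by
    intro r hr
    obtain ⟨k, hk⟩ := exists_rpow_neg_natCast_add_three_le (by norm_num : (1 : ℝ) < 8) hr
    rw [hV_root]
    exact (div_ofReal_le_ofReal_div_mul hn hα _).trans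
      (le_stummelModA_bumpRoot_rpow hp hα hsupp (hδ k) hk)
  exact ⟨memLocLp_of_stummelModA_lt_top hp hαn.le
      (hV_root ▸ measurable_bumpRoot.aestronglyMeasurable) one_pos (hfin 1 one_pos), hfin, hlow,
    not_memStummelA_of_forall_le hp (ENNReal.div_pos (measure_ball_pos volume 0 one_pos).ne'
      ofReal_ne_top).ne' hlow⟩

/-- With `x_k = (2^{-k},0,…,0)` and `V_k = 8^{αk} χ_{B(x_k,8^{-k})}` (k ≥ 3),
the function `V = (Σ_{k≥3} V_k)^{1/p}` is in `L^p_loc(ℝ^n)`, satisfies `η_{p,α}V(r) < ∞` for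
all `r > 0` (so `V ∈ S̃_{p,α}`) but `η_{p,α}V(r)^p ≥ |B(0,1)|/α` for all `r > 0`, and
`V ∉ S_{p,α}(ℝ^n)`; hence the inclusion `S_{p,α} ⊆ S̃_{p,α}` is proper. -/
theorem bounded_stummel_class_proper (n : ℕ) (hn : 0 < n) (p α : ℝ)
    (hp : 1 ≤ p) (hα : 0 < α) (hαn : α < n)
    (x : ℕ → Euc n)
    (hx : x = fun k : ℕ => EuclideanSpace.single (⟨0, hn⟩ : Fin n)
      ((2 : ℝ) ^ (-((k : ℝ) + 3))))
    (V : Euc n → ℝ)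
    (hV : V = fun y =>
      (∑' k : ℕ, Set.indicator (ball (x k) ((8 : ℝ) ^ (-((k : ℝ) + 3))))
        (fun _ => (8 : ℝ) ^ (α * ((k : ℝ) + 3))) y) ^ (1 / p)) :
    MemLocLp n p V ∧
    (∀ r > 0, stummelModA n p α V r < ⊤) ∧
    (∀ r > 0, volume (ball (0 : Euc n) 1) / ENNReal.ofReal α ≤ stummelModA n p α V r ^ p) ∧
    ¬ MemStummelA n p α V := by
  exact bounded_stummel_class_proper_general n hn p α (one_pos.trans_le hp) hα hαn x hx V hV
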